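/- Let R be a ring, let F₁ →^{f₁} F₂ →^{f₂} F₃ → ⋯ be a countable direct system of finitely generated free R-modules with direct limit B = lim F_n, and let M be an R-module. Then every short exact sequence 0 → M^{(ℕ)} → X → B → 0 of R-modules splits (equivalently, Ext¹_R(B, M^{(ℕ)}) = 0, where M^{(ℕ)} is the direct sum of countably many copies of M) if and only if the tower (Hom_R(F_n, M), Hom_R(f_n, M))_{n∈ℕ} satisfies the Mittag-Leffler condition. -/

import Mathlib

/-!
The telescope `0 → ⊕ Fₙ → ⊕ Fₙ → B → 0` is a projective resolution of `B` (`phiMap_injective`),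
so every extension of `B` by `N` splits iff every map `⊕ Fₙ → N` extends along the telescope map
(`forall_split_iff_forall_extend`), i.e. iff `(gₙ) ↦ (gₙ - gₙ₊₁ ∘ fₙ)` is onto on `∏ Hom(Fₙ, N)`
(`forall_extend_phiMap_iff`): this is the vanishing of `lim¹ Hom(Fₙ, N)`.

Take `N = M^{(ℕ)}`. Since `Fₙ` is finitely generated, a map `Fₙ → M^{(ℕ)}` has only finitely many
nonzero components. Hence the Mittag-Leffler condition passes from `Hom(Fₙ, M)` to
`Hom(Fₙ, M^{(ℕ)})` (`mittagLeffler_homMap_directSum`), and a Mittag-Leffler tower has vanishing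
`lim¹` (`MittagLeffler.exists_sub_eq`). Conversely, if the images in `Hom(F_m, M)` never become
stationary, witnesses of the successive drops, placed in distinct summands of `M^{(ℕ)}`, form a
family outside the image; a preimage would have a component at `m` with infinitely many nonzero
coordinates (`mittagLeffler_of_forall_exists_sub_eq`).
-/


/-!
STATEMENT 11 (Proposition 2.5, first part): let `(Fₙ, fₙ)` be a countable direct
system of finitely generated free modules with direct limit `B` (presented by the
exact sequence `0 → ⊕ₙ Fₙ →^φ ⊕ₙ Fₙ →^q B → 0`), and let `M` be a module.  Then
every short exact sequence `0 → M^{(ℕ)} → X → B → 0` splits iff the tower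
`(Hom(Fₙ, M), Hom(fₙ, M))` satisfies the Mittag-Leffler condition.
-/

universe u

open DirectSum

variable {R : Type u} [Ring R]

/-- Composite `λ_m ∘ ⋯ ∘ λ_{m+k-1} : H_{m+k} → H_m` in a tower of abelian groups. -/
def towerComp {H : ℕ → Type v} [∀ n, AddCommGroup (H n)]
    (lam : ∀ n, H (n + 1) →+ H n) (m : ℕ) : (k : ℕ) → H (m + k) →+ H m
  | 0 => AddMonoidHom.id (H m)
  | k + 1 => (towerComp lam m k).comp (lam (m + k))

/-- The Mittag-Leffler condition: all the descending chains of images are stationary. -/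
def MittagLeffler {H : ℕ → Type v} [∀ n, AddCommGroup (H n)]
    (lam : ∀ n, H (n + 1) →+ H n) : Prop :=
  ∀ m, ∃ d, ∀ j, d ≤ j →
    Set.range ⇑(towerComp lam m j) = Set.range ⇑(towerComp lam m d)

/-- `Hom_R(fₙ, M) : Hom_R(F_{n+1}, M) → Hom_R(Fₙ, M)`, `g ↦ g ∘ fₙ`. -/
def homMap {C : ℕ → Type u} [∀ n, AddCommGroup (C n)] [∀ n, Module R (C n)]
    (f : ∀ n, C n →ₗ[R] C (n + 1)) (M : Type v) [AddCommGroup M] [Module R M]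
    (n : ℕ) : (C (n + 1) →ₗ[R] M) →+ (C n →ₗ[R] M) where
  toFun g := g.comp (f n)
  map_zero' := by ext x; simp
  map_add' g h := by ext x; simp

/-- The map `φ : ⊕ₙ Fₙ → ⊕ₙ Fₙ` determined by `φ ∘ εₙ = εₙ - ε_{n+1} ∘ fₙ`, for the
direct system of finitely generated free modules `Fₙ = R^{k n}`. -/
noncomputable def phiMap (R : Type u) [Ring R] (k : ℕ → ℕ)
    (f : ∀ n, (Fin (k n) → R) →ₗ[R] (Fin (k (n + 1)) → R)) :
    (⨁ n, (Fin (k n) → R)) →ₗ[R] ⨁ n, (Fin (k n) → R) :=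
  DirectSum.toModule R ℕ (⨁ n, (Fin (k n) → R))
    (fun n => DirectSum.lof R ℕ (fun n => Fin (k n) → R) n
      - (DirectSum.lof R ℕ (fun n => Fin (k n) → R) (n + 1)).comp (f n))

/-! ### Splitting of extensions and extension of maps -/

/-- For a projective presentation `0 → K → P → B → 0`, every extension of `B` by `N` splits iff
every map `K → N` extends to `P`, i.e. `Ext¹(B, N)` is the cokernel of
`Hom(P, N) → Hom(K, N)`. -/
theorem forall_split_iff_forall_extend {K P B N : Type u}
    [AddCommGroup K] [Module R K] [AddCommGroup P] [Module R P] [Module.Projective R P]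
    [AddCommGroup B] [Module R B] [AddCommGroup N] [Module R N]
    (φ : K →ₗ[R] P) (q : P →ₗ[R] B) (hφ : Function.Injective φ) (hq : Function.Surjective q)
    (hker : LinearMap.ker q = LinearMap.range φ) :
    (∀ (X : Type u) [AddCommGroup X] [Module R X] (i : N →ₗ[R] X) (p : X →ₗ[R] B),
        Function.Injective i → Function.Surjective p →
        LinearMap.range i = LinearMap.ker p →
        ∃ s : B →ₗ[R] X, p.comp s = LinearMap.id) ↔
      ∀ h : K →ₗ[R] N, ∃ g : P →ₗ[R] N, g.comp φ = h := by
  have hqφ (x : K) : q (φ x) = 0 := by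
    have : φ x ∈ LinearMap.ker q := hker ▸ LinearMap.mem_range_self φ x
    exact this
  constructor
  · intro H h
    -- Split the pushout of `0 → K → P → B → 0` along `h`.
    let W : Submodule R (N × P) := LinearMap.range (h.prod (-φ))
    let i : N →ₗ[R] (N × P) ⧸ W := W.mkQ.comp (LinearMap.inl R N P)
    have hW : W ≤ LinearMap.ker (q.comp (LinearMap.snd R N P)) := by
      rintro _ ⟨x, rfl⟩
      simp [hqφ]
    let p : ((N × P) ⧸ W) →ₗ[R] B := W.liftQ (q.comp (LinearMap.snd R N P)) hW
    have hpm (z : N × P) : p (W.mkQ z) = q z.2 := rfl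
    have hrel (x : K) : W.mkQ (0, φ x) = i (h x) := by
      change W.mkQ (0, φ x) = W.mkQ (h x, 0)
      rw [← sub_eq_zero, ← map_sub, Submodule.mkQ_apply, Submodule.Quotient.mk_eq_zero]
      exact ⟨-x, by simp⟩
    have hi : Function.Injective i := by
      rw [← LinearMap.ker_eq_bot, LinearMap.ker_eq_bot']
      intro n hn
      have : ((n, 0) : N × P) ∈ W := (Submodule.Quotient.mk_eq_zero W).1 hn
      obtain ⟨x, hx⟩ := this
      have h1 : h x = n := congrArg Prod.fst hx
      have h2 : -φ x = 0 := congrArg Prod.snd hx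
      have h3 : x = 0 := hφ (by rw [map_zero, ← neg_eq_zero, h2])
      rw [← h1, h3, map_zero]
    have hp : Function.Surjective p := by
      intro b
      obtain ⟨y, rfl⟩ := hq b
      exact ⟨W.mkQ (0, y), hpm _⟩
    have hex : LinearMap.range i = LinearMap.ker p := by
      apply le_antisymm
      · rintro _ ⟨n, rfl⟩
        exact (hpm (n, 0)).trans (map_zero q)
      · intro z hz
        obtain ⟨⟨n, y⟩, rfl⟩ := W.mkQ_surjective z
        have hy : y ∈ LinearMap.ker q := hz
        rw [hker] at hy
        obtain ⟨x, rfl⟩ := hy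
        refine ⟨n + h x, ?_⟩
        rw [map_add, ← hrel]
        change W.mkQ (n, 0) + _ = _
        rw [← map_add]
        simp
    obtain ⟨s, hs⟩ := H _ i p hi hp hex
    -- The difference of `P → X` and `s ∘ q` takes values in `N`, and restricts to `h` on `K`.
    let t : P →ₗ[R] (N × P) ⧸ W := W.mkQ.comp (LinearMap.inr R N P) - s.comp q
    have ht (y : P) : t y ∈ LinearMap.range i := by
      rw [hex, LinearMap.mem_ker]
      have : p (s (q y)) = q y := LinearMap.congr_fun hs (q y)
      change p (W.mkQ (0, y) - s (q y)) = 0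
      rw [map_sub, this, hpm, sub_self]
    refine ⟨(LinearEquiv.ofInjective i hi).symm.toLinearMap.comp (t.codRestrict _ ht), ?_⟩
    ext x
    apply hi
    have hinv (z : LinearMap.range i) : i ((LinearEquiv.ofInjective i hi).symm z) = z :=
      congrArg Subtype.val ((LinearEquiv.ofInjective i hi).apply_symm_apply z)
    refine (hinv _).trans ?_
    change W.mkQ (0, φ x) - s (q (φ x)) = i (h x)
    rw [hqφ, map_zero, sub_zero, hrel]
  · intro H X _ _ i p hi hp hex
    obtain ⟨l, hl⟩ := Module.projective_lifting_property p q hp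
    have hl' (y : P) : p (l y) = q y := LinearMap.congr_fun hl y
    have hlφ (x : K) : l (φ x) ∈ LinearMap.range i := by
      rw [hex, LinearMap.mem_ker, hl', hqφ]
    obtain ⟨g, hg⟩ := H ((LinearEquiv.ofInjective i hi).symm.toLinearMap.comp
      ((l.comp φ).codRestrict _ hlφ))
    have hinv (z : LinearMap.range i) : i ((LinearEquiv.ofInjective i hi).symm z) = z :=
      congrArg Subtype.val ((LinearEquiv.ofInjective i hi).apply_symm_apply z)
    have hg' (x : K) : i (g (φ x)) = l (φ x) :=
      (congrArg i (LinearMap.congr_fun hg x)).trans (hinv _)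
    have hpi (n : N) : p (i n) = 0 := by
      have : i n ∈ LinearMap.ker p := hex ▸ LinearMap.mem_range_self i n
      exact this
    -- `l - i ∘ g` vanishes on `K`, hence descends to a section `B → X`.
    have hle : LinearMap.ker q ≤ LinearMap.ker (l - i.comp g) := by
      rw [hker]
      rintro _ ⟨x, rfl⟩
      simp [hg']
    refine ⟨((LinearMap.ker q).liftQ _ hle).comp
      (q.quotKerEquivOfSurjective hq).symm.toLinearMap, ?_⟩
    ext b
    obtain ⟨y, rfl⟩ := hq b
    have : (q.quotKerEquivOfSurjective hq).symm (q y) = (LinearMap.ker q).mkQ y := by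
      rw [LinearEquiv.symm_apply_eq]
      rfl
    change p ((LinearMap.ker q).liftQ _ hle ((q.quotKerEquivOfSurjective hq).symm (q y))) = q y
    rw [this]
    change p (l y - i (g y)) = q y
    rw [map_sub, hl', hpi, sub_zero]

/-! ### The telescope map -/

theorem phiMap_lof (k : ℕ → ℕ) (f : ∀ n, (Fin (k n) → R) →ₗ[R] (Fin (k (n + 1)) → R))
    (n : ℕ) (x : Fin (k n) → R) :
    phiMap R k f (lof R ℕ (fun n => Fin (k n) → R) n x) =
      lof R ℕ (fun n => Fin (k n) → R) n x -
        lof R ℕ (fun n => Fin (k n) → R) (n + 1) (f n x) := by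
  rw [phiMap, toModule_lof]
  rfl

theorem phiMap_apply_zero (k : ℕ → ℕ) (f : ∀ n, (Fin (k n) → R) →ₗ[R] (Fin (k (n + 1)) → R))
    (x : ⨁ n, (Fin (k n) → R)) : phiMap R k f x 0 = x 0 := by
  have : (component R ℕ (fun n => Fin (k n) → R) 0).comp (phiMap R k f) =
      component R ℕ (fun n => Fin (k n) → R) 0 := by
    refine linearMap_ext R fun n => LinearMap.ext fun y => ?_
    simp only [LinearMap.comp_apply, phiMap_lof, map_sub]
    rw [component.of _ _ (n + 1), dif_neg (Nat.succ_ne_zero n), sub_zero]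
  exact LinearMap.congr_fun this x

theorem phiMap_apply_succ (k : ℕ → ℕ) (f : ∀ n, (Fin (k n) → R) →ₗ[R] (Fin (k (n + 1)) → R))
    (x : ⨁ n, (Fin (k n) → R)) (n : ℕ) :
    phiMap R k f x (n + 1) = x (n + 1) - f n (x n) := by
  have : (component R ℕ (fun n => Fin (k n) → R) (n + 1)).comp (phiMap R k f) =
      component R ℕ (fun n => Fin (k n) → R) (n + 1) -
        (f n).comp (component R ℕ (fun n => Fin (k n) → R) n) := by
    refine linearMap_ext R fun j => LinearMap.ext fun y => ?_
    simp only [LinearMap.comp_apply, LinearMap.sub_apply, phiMap_lof, map_sub]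
    congr 1
    by_cases hj : j = n
    · subst hj
      rw [component.lof_self, component.lof_self]
    · rw [component.of _ _ (j + 1), component.of _ _ j, dif_neg (by omega), dif_neg hj, map_zero]
  exact LinearMap.congr_fun this x

theorem phiMap_injective (k : ℕ → ℕ)
    (f : ∀ n, (Fin (k n) → R) →ₗ[R] (Fin (k (n + 1)) → R)) :
    Function.Injective (phiMap R k f) := by
  rw [← LinearMap.ker_eq_bot, LinearMap.ker_eq_bot']
  intro x hx
  refine DFinsupp.ext fun n => ?_
  induction n with
  | zero => rw [← phiMap_apply_zero k f x, hx]
  | succ n ih =>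
    have h := phiMap_apply_succ k f x n
    rw [hx, ih] at h
    simpa using h.symm

/-- Extending maps along `phiMap` amounts to the vanishing of `lim¹` of the tower
`Hom(Fₙ, N)`. -/
theorem forall_extend_phiMap_iff (k : ℕ → ℕ)
    (f : ∀ n, (Fin (k n) → R) →ₗ[R] (Fin (k (n + 1)) → R))
    (N : Type u) [AddCommGroup N] [Module R N] :
    (∀ h : (⨁ n, (Fin (k n) → R)) →ₗ[R] N, ∃ g : (⨁ n, (Fin (k n) → R)) →ₗ[R] N,
        g.comp (phiMap R k f) = h) ↔
      ∀ h : ∀ n, (Fin (k n) → R) →ₗ[R] N, ∃ g : ∀ n, (Fin (k n) → R) →ₗ[R] N,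
        ∀ n, g n - homMap f N n (g (n + 1)) = h n := by
  constructor
  · intro H h
    obtain ⟨g, hg⟩ := H (toModule R ℕ N h)
    refine ⟨fun n => g.comp (lof R ℕ (fun n => Fin (k n) → R) n), fun n => LinearMap.ext fun x => ?_⟩
    have h1 := LinearMap.congr_fun hg (lof R ℕ (fun n => Fin (k n) → R) n x)
    rw [LinearMap.comp_apply, phiMap_lof, map_sub, toModule_lof] at h1
    exact h1
  · intro H h
    obtain ⟨g, hg⟩ := H fun n => h.comp (lof R ℕ (fun n => Fin (k n) → R) n)
    refine ⟨toModule R ℕ N g, linearMap_ext R fun n => LinearMap.ext fun x => ?_⟩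
    have h1 := LinearMap.congr_fun (hg n) x
    rw [LinearMap.comp_apply, LinearMap.comp_apply, phiMap_lof, map_sub, toModule_lof,
      toModule_lof]
    exact h1

/-! ### Mittag-Leffler towers -/

section Tower

universe w

variable {A : ℕ → Type w} [∀ n, AddCommGroup (A n)] (lam : ∀ n, A (n + 1) →+ A n)

/-- The transition map `A n → A m` of a tower for `m ≤ n`, with junk value `0` for `n < m`.
Unlike `towerComp`, the source index is a free variable, so the transition maps compose
without transport along equalities of indices. -/
def towerMap (m : ℕ) : (n : ℕ) → A n →+ A m
  | 0 => if h : m = 0 then h ▸ AddMonoidHom.id (A m) else 0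
  | n + 1 => if h : m = n + 1 then h ▸ AddMonoidHom.id (A m) else (towerMap m n).comp (lam n)

theorem towerMap_self (m : ℕ) (x : A m) : towerMap lam m m x = x := by
  cases m <;> simp [towerMap]

theorem towerMap_succ {m n : ℕ} (h : m ≤ n) (x : A (n + 1)) :
    towerMap lam m (n + 1) x = towerMap lam m n (lam n x) := by
  rw [towerMap, dif_neg (by omega)]
  rfl

theorem lam_towerMap {m n : ℕ} (h : m + 1 ≤ n) (x : A n) :
    lam m (towerMap lam (m + 1) n x) = towerMap lam m n x := by
  induction n, h using Nat.le_induction with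
  | base => rw [towerMap_self, towerMap_succ lam le_rfl, towerMap_self]
  | succ n h ih => rw [towerMap_succ lam h, ih, towerMap_succ lam (by omega)]

theorem towerComp_eq_towerMap (m j : ℕ) (x : A (m + j)) :
    towerComp lam m j x = towerMap lam m (m + j) x := by
  induction j with
  | zero => exact (towerMap_self lam m x).symm
  | succ j ih => exact (ih (lam (m + j) x)).trans (towerMap_succ lam (Nat.le_add_right m j) x).symm

theorem range_towerMap_anti {m n n' : ℕ} (h : m ≤ n) (h' : n ≤ n') :
    Set.range (towerMap lam m n') ⊆ Set.range (towerMap lam m n) := by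
  induction n', h' using Nat.le_induction with
  | base => exact subset_rfl
  | succ n' h' ih =>
    rintro _ ⟨x, rfl⟩
    exact ih ⟨lam n' x, (towerMap_succ lam (h.trans h') x).symm⟩

/-- Only the inclusion of earlier images in later ones carries content, as the images always
decrease. -/
theorem mittagLeffler_iff :
    MittagLeffler lam ↔ ∀ m, ∃ n, m ≤ n ∧ ∀ n', n ≤ n' →
      Set.range (towerMap lam m n) ⊆ Set.range (towerMap lam m n') := by
  have hr (m j : ℕ) : Set.range (towerComp lam m j) = Set.range (towerMap lam m (m + j)) :=
    congrArg Set.range (funext (towerComp_eq_towerMap lam m j))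
  simp only [MittagLeffler, hr]
  refine forall_congr' fun m => ⟨?_, ?_⟩
  · rintro ⟨d, hd⟩
    refine ⟨m + d, by omega, fun n' hn' => ?_⟩
    obtain ⟨j, rfl⟩ := Nat.exists_eq_add_of_le (show m ≤ n' by omega)
    exact (hd j (by omega)).ge
  · rintro ⟨n, hmn, hn⟩
    obtain ⟨d, rfl⟩ := Nat.exists_eq_add_of_le hmn
    exact ⟨d, fun j hj => (range_towerMap_anti lam (by omega) (by omega)).antisymm
      (hn (m + j) (by omega))⟩

theorem towerMap_eq_of_compatible (a : ∀ n, A n) {m p D : ℕ} (hmp : m ≤ p) (hpD : p ≤ D)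
    (ha : ∀ n, p ≤ n → n < D → a n = lam n (a (n + 1))) :
    towerMap lam m p (a p) = towerMap lam m D (a D) := by
  induction D, hpD using Nat.le_induction with
  | base => rfl
  | succ D h ih =>
    rw [ih fun n h1 h2 => ha n h1 (by omega), ha D h (by omega), towerMap_succ lam (by omega)]

/-- A Mittag-Leffler tower has vanishing `lim¹`. -/
theorem MittagLeffler.exists_sub_eq (H : MittagLeffler lam) (h : ∀ n, A n) :
    ∃ g : ∀ n, A n, ∀ n, g n - lam n (g (n + 1)) = h n := by
  rw [mittagLeffler_iff] at H
  choose e hme he using H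
  -- Monotone stages `E m ≥ e m` at which the image in `A m` is stable.
  let E : ℕ → ℕ := fun m => ∑ j ∈ Finset.range (m + 1), e j
  have hEe (m : ℕ) : e m ≤ E m :=
    Finset.single_le_sum (f := e) (fun _ _ => Nat.zero_le _) (Finset.self_mem_range_succ m)
  have hE (m : ℕ) : E m ≤ E (m + 1) := by
    simp only [E, Finset.sum_range_succ _ (m + 1)]
    omega
  -- `S m` is the stable image in `A m`.
  let S : ∀ m, AddSubgroup (A m) := fun m => (towerMap lam m (e m)).range
  have hS (m n : ℕ) (hn : e m ≤ n) (x : A n) : towerMap lam m n x ∈ S m :=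
    range_towerMap_anti lam (hme m) hn ⟨x, rfl⟩
  have hsurj (m : ℕ) (x : A m) (hx : x ∈ S m) : ∃ y ∈ S (m + 1), lam m y = x := by
    obtain ⟨z, hz⟩ := he m (max (e m) (e (m + 1))) (le_max_left _ _) hx
    refine ⟨towerMap lam (m + 1) _ z, hS _ _ (le_max_right _ _) z, ?_⟩
    rw [lam_towerMap lam ((hme (m + 1)).trans (le_max_right _ _)), hz]
  -- Truncating the formal solution `∑ j ≥ m, λ_{m,j} h_j` solves the problem up to stable elements.
  let g : ∀ m, A m := fun m => ∑ j ∈ Finset.Ico m (E m), towerMap lam m j (h j)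
  have hg (m : ℕ) : h m - (g m - lam m (g (m + 1))) ∈ S m := by
    have h1 : lam m (g (m + 1)) =
        ∑ j ∈ Finset.Ico (m + 1) (E (m + 1)), towerMap lam m j (h j) := by
      rw [map_sum]
      exact Finset.sum_congr rfl fun j hj => lam_towerMap lam (Finset.mem_Ico.1 hj).1 _
    have h2 : h m + lam m (g (m + 1)) =
        ∑ j ∈ Finset.Ico m (E (m + 1)), towerMap lam m j (h j) := by
      have : m < E (m + 1) := by have := hme (m + 1); have := hEe (m + 1); omega
      rw [h1, Finset.sum_eq_sum_Ico_succ_bot this, towerMap_self]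
    have h3 := Finset.sum_Ico_consecutive (fun j => towerMap lam m j (h j))
      ((hme m).trans (hEe m)) (hE m)
    have h4 : h m - (g m - lam m (g (m + 1))) =
        ∑ j ∈ Finset.Ico (E m) (E (m + 1)), towerMap lam m j (h j) := by
      rw [← sub_add, sub_add_eq_add_sub, h2, ← h3, add_sub_cancel_left]
    rw [h4]
    exact AddSubgroup.sum_mem _ fun j hj => hS m j ((hEe m).trans (Finset.mem_Ico.1 hj).1) _
  -- The transition maps between stable images are onto, so the error is absorbed recursively.
  have hstep (m : ℕ) (t : S m) :
      ∃ t' : S (m + 1), (t : A m) - lam m t' = h m - (g m - lam m (g (m + 1))) := by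
    obtain ⟨y, hy, hyx⟩ := hsurj m _ (sub_mem t.2 (hg m))
    exact ⟨⟨y, hy⟩, by rw [hyx, sub_sub_cancel]⟩
  choose nxt hnxt using hstep
  let t : ∀ m, S m := fun m => Nat.rec 0 nxt m
  refine ⟨fun m => g m + (t m).1, fun m => ?_⟩
  have h1 : (t m).1 - lam m (t (m + 1)).1 = h m - (g m - lam m (g (m + 1))) := hnxt m (t m)
  rw [map_add, add_sub_add_comm, h1, add_sub_cancel]

end Tower

/-! ### Maps from a finitely generated free module into `M^{(ℕ)}` -/

/-- A map from a finitely generated free module to `M^{(ℕ)}` lands in a finite subsum. -/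
theorem exists_finset_component_comp_eq_zero {M : Type u} [AddCommGroup M] [Module R M] {c : ℕ}
    (g : (Fin c → R) →ₗ[R] ⨁ _ : ℕ, M) :
    ∃ S : Finset ℕ, ∀ i, i ∉ S → (component R ℕ (fun _ => M) i).comp g = 0 := by
  classical
  refine ⟨Finset.univ.biUnion fun a => DFinsupp.support (g (Pi.single a 1)), fun i hi => ?_⟩
  refine LinearMap.pi_ext' fun a => LinearMap.ext_ring ?_
  by_contra hne
  exact hi (Finset.mem_biUnion.2 ⟨a, Finset.mem_univ a, DFinsupp.mem_support_iff.2 hne⟩)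

theorem towerComp_map_comm {A A' : ℕ → Type*} [∀ n, AddCommGroup (A n)]
    [∀ n, AddCommGroup (A' n)] (lam : ∀ n, A (n + 1) →+ A n) (lam' : ∀ n, A' (n + 1) →+ A' n)
    (θ : ∀ n, A n →+ A' n) (hθ : ∀ n x, lam' n (θ (n + 1) x) = θ n (lam n x)) (m j : ℕ)
    (x : A (m + j)) : towerComp lam' m j (θ (m + j) x) = θ m (towerComp lam m j x) := by
  induction j with
  | zero => rfl
  | succ j ih =>
    change towerComp lam' m j (lam' (m + j) (θ (m + j + 1) x)) = _
    rw [hθ, ih]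
    rfl

/-- Postcomposition with a fixed map, as a morphism of Hom groups. -/
def postComp {C M N : Type*} [AddCommGroup C] [Module R C] [AddCommGroup M] [Module R M]
    [AddCommGroup N] [Module R N] (u : M →ₗ[R] N) : (C →ₗ[R] M) →+ (C →ₗ[R] N) where
  toFun g := u.comp g
  map_zero' := LinearMap.comp_zero u
  map_add' g h := LinearMap.comp_add g h u

theorem towerComp_homMap_comp {C : ℕ → Type u} [∀ n, AddCommGroup (C n)] [∀ n, Module R (C n)]
    (f : ∀ n, C n →ₗ[R] C (n + 1)) {M N : Type u} [AddCommGroup M] [Module R M]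
    [AddCommGroup N] [Module R N] (u : M →ₗ[R] N) (m j : ℕ) (g : C (m + j) →ₗ[R] M) :
    towerComp (H := fun n => C n →ₗ[R] N) (homMap f N) m j (u.comp g) =
      u.comp (towerComp (H := fun n => C n →ₗ[R] M) (homMap f M) m j g) :=
  towerComp_map_comm (A := fun n => C n →ₗ[R] M) (A' := fun n => C n →ₗ[R] N)
    (homMap f M) (homMap f N) (fun _ => postComp u) (fun _ _ => rfl) m j g

/-- The Mittag-Leffler condition passes from `M` to `M^{(ℕ)}`. -/
theorem mittagLeffler_homMap_directSum (k : ℕ → ℕ)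
    (f : ∀ n, (Fin (k n) → R) →ₗ[R] (Fin (k (n + 1)) → R))
    (M : Type u) [AddCommGroup M] [Module R M]
    (H : MittagLeffler (H := fun n => (Fin (k n) → R) →ₗ[R] M) (homMap f M)) :
    MittagLeffler (H := fun n => (Fin (k n) → R) →ₗ[R] ⨁ _ : ℕ, M)
      (homMap f (⨁ _ : ℕ, M)) := by
  intro m
  obtain ⟨d, hd⟩ := H m
  refine ⟨d, fun j hj => Set.Subset.antisymm ?_ ?_⟩
  · have hr (j : ℕ) := congrArg Set.range (funext (towerComp_eq_towerMap
      (A := fun n => (Fin (k n) → R) →ₗ[R] ⨁ _ : ℕ, M) (homMap f (⨁ _ : ℕ, M)) m j))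
    rw [hr, hr]
    exact range_towerMap_anti _ (by omega) (by omega)
  · rintro _ ⟨g', rfl⟩
    set g := towerComp (H := fun n => (Fin (k n) → R) →ₗ[R] ⨁ _ : ℕ, M)
      (homMap f (⨁ _ : ℕ, M)) m d g' with hg
    obtain ⟨S, hS⟩ := exists_finset_component_comp_eq_zero g
    have hw (i : ℕ) : (component R ℕ (fun _ => M) i).comp g ∈
        Set.range (towerComp (H := fun n => (Fin (k n) → R) →ₗ[R] M) (homMap f M) m j) := by
      rw [hd j hj, hg, ← towerComp_homMap_comp]
      exact ⟨_, rfl⟩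
    choose w hw using hw
    refine ⟨∑ i ∈ S, (lof R ℕ (fun _ => M) i).comp (w i), ?_⟩
    rw [map_sum]
    simp only [towerComp_homMap_comp, hw]
    refine LinearMap.ext fun x => DFinsupp.ext fun l => ?_
    change component R ℕ (fun _ => M) l _ = component R ℕ (fun _ => M) l (g x)
    rw [LinearMap.sum_apply, map_sum]
    simp only [LinearMap.comp_apply]
    by_cases hl : l ∈ S
    · rw [Finset.sum_eq_single_of_mem l hl, component.lof_self]
      intro i _ hi
      rw [component.of, dif_neg hi]
    · have h0 : component R ℕ (fun _ => M) l (g x) = 0 := LinearMap.congr_fun (hS l hl) x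
      rw [h0]
      refine Finset.sum_eq_zero fun i hi => ?_
      rw [component.of, dif_neg fun h : i = l => hl (h ▸ hi)]

/-- If the tower `Hom(Fₙ, M^{(ℕ)})` has vanishing `lim¹`, then `Hom(Fₙ, M)` is Mittag-Leffler.
Otherwise some `m` admits `yₙ : Fₙ → M`, `n ≥ m`, whose restrictions to `F_m` lie outside a later
image. Placing `yₙ` in the `n`-th summand of `M^{(ℕ)}` gives a family that is not a coboundary:
for `(gₙ)` bounding it, `g_m` has a zero component at some `d ≥ m`, and that component expresses
the restriction of `y_d` through arbitrarily late stages. -/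
theorem mittagLeffler_of_forall_exists_sub_eq (k : ℕ → ℕ)
    (f : ∀ n, (Fin (k n) → R) →ₗ[R] (Fin (k (n + 1)) → R))
    (M : Type u) [AddCommGroup M] [Module R M]
    (H : ∀ h : ∀ n, (Fin (k n) → R) →ₗ[R] ⨁ _ : ℕ, M,
      ∃ g : ∀ n, (Fin (k n) → R) →ₗ[R] ⨁ _ : ℕ, M,
        ∀ n, g n - homMap f (⨁ _ : ℕ, M) n (g (n + 1)) = h n) :
    MittagLeffler (H := fun n => (Fin (k n) → R) →ₗ[R] M) (homMap f M) := by
  let T := towerMap (A := fun n => (Fin (k n) → R) →ₗ[R] M) (homMap f M)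
  refine (mittagLeffler_iff (A := fun n => (Fin (k n) → R) →ₗ[R] M) (homMap f M)).2 ?_
  by_contra! hcon
  obtain ⟨m, hm⟩ := hcon
  have hy (n : ℕ) : ∃ y : (Fin (k n) → R) →ₗ[R] M, m ≤ n → ∃ n', n ≤ n' ∧
      T m n y ∉ Set.range (T m n') := by
    by_cases hmn : m ≤ n
    · obtain ⟨n', hn', hsub⟩ := hm n hmn
      obtain ⟨_, ⟨y, rfl⟩, hy⟩ := Set.not_subset.1 hsub
      exact ⟨y, fun _ => ⟨n', hn', hy⟩⟩
    · exact ⟨0, fun h => absurd h hmn⟩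
  choose y hy using hy
  obtain ⟨g, hg⟩ := H fun n => (lof R ℕ (fun _ => M) n).comp (y n)
  obtain ⟨S, hS⟩ := exists_finset_component_comp_eq_zero (g m)
  obtain ⟨d, hd⟩ := Infinite.exists_notMem_finset (S ∪ Finset.range m)
  rw [Finset.mem_union, not_or, Finset.mem_range, not_lt] at hd
  obtain ⟨n', hn', hout⟩ := hy d hd.2
  let a : ∀ n, (Fin (k n) → R) →ₗ[R] M := fun n => (component R ℕ (fun _ => M) d).comp (g n)
  have ha (n : ℕ) : a n - homMap f M n (a (n + 1)) =
      (component R ℕ (fun _ => M) d).comp ((lof R ℕ (fun _ => M) n).comp (y n)) := by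
    rw [← hg n, LinearMap.comp_sub]
    rfl
  have ha_ne (n : ℕ) (hn : n ≠ d) : a n = homMap f M n (a (n + 1)) := by
    rw [← sub_eq_zero, ha]
    refine LinearMap.ext fun x => ?_
    simp only [LinearMap.comp_apply]
    rw [component.of, dif_neg hn]
    rfl
  have ha_d : a d = y d + homMap f M d (a (d + 1)) := by
    rw [← sub_eq_iff_eq_add, ha]
    refine LinearMap.ext fun x => ?_
    simp only [LinearMap.comp_apply]
    rw [component.lof_self]
  have h0 : T m d (a d) = 0 := by
    rw [← towerMap_eq_of_compatible (A := fun n => (Fin (k n) → R) →ₗ[R] M) (homMap f M) a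
      le_rfl hd.2 fun n _ h => ha_ne n h.ne, towerMap_self]
    exact hS d hd.1
  have h1 : T m d (homMap f M d (a (d + 1))) = T m (n' + 1) (a (n' + 1)) := by
    rw [← towerMap_eq_of_compatible (A := fun n => (Fin (k n) → R) →ₗ[R] M) (homMap f M) a
      (show m ≤ d + 1 by omega) (show d + 1 ≤ n' + 1 by omega) fun n h _ => ha_ne n (by omega)]
    exact (towerMap_succ (A := fun n => (Fin (k n) → R) →ₗ[R] M) (homMap f M) hd.2 _).symm
  apply hout
  refine range_towerMap_anti (A := fun n => (Fin (k n) → R) →ₗ[R] M) (homMap f M)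
    (show m ≤ n' by omega) (Nat.le_succ n') ⟨-a (n' + 1), ?_⟩
  change T m (n' + 1) (-a (n' + 1)) = T m d (y d)
  rw [map_neg, ← h1, neg_eq_iff_add_eq_zero, add_comm, ← map_add, ← ha_d, h0]

theorem ext_vanishing_iff_MittagLeffler
    (k : ℕ → ℕ) (f : ∀ n, (Fin (k n) → R) →ₗ[R] (Fin (k (n + 1)) → R))
    (B : Type u) [AddCommGroup B] [Module R B]
    (q : (⨁ n, (Fin (k n) → R)) →ₗ[R] B) (hq : Function.Surjective q)
    (hker : LinearMap.ker q = LinearMap.range (phiMap R k f))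
    (M : Type u) [AddCommGroup M] [Module R M] :
    (∀ (X : Type u) [AddCommGroup X] [Module R X]
        (i : (⨁ _ : ℕ, M) →ₗ[R] X) (p : X →ₗ[R] B),
        Function.Injective i → Function.Surjective p →
        LinearMap.range i = LinearMap.ker p →
        ∃ s : B →ₗ[R] X, p.comp s = LinearMap.id) ↔
      MittagLeffler (H := fun n => (Fin (k n) → R) →ₗ[R] M) (homMap f M) := by
  rw [forall_split_iff_forall_extend (phiMap R k f) q (phiMap_injective k f) hq hker,
    forall_extend_phiMap_iff]
  exact ⟨mittagLeffler_of_forall_exists_sub_eq k f M, fun H =>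
    (mittagLeffler_homMap_directSum k f M H).exists_sub_eq⟩
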